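/- Let Ω ⊂ ℝ² be a compact convex set of positive measure, let D ⊂ ℝ² be a closed convex set of finite positive measure with 0 in its interior, let Q ⊂ (0,∞) be a uniformly discrete set, and set P = Q∂D. If P is not a sampling set for B_Ω, then for every n ∈ ℕ and every ε > 0 there exist a function f_n ∈ B_{(1+ε)Ω} and a point x_n ∈ ℝ² such that |x_n| > n, ‖f_n‖_∞ = 1, sup_{x ∈ P} |f_n(x)| < 1/n, and |f_n(x_n)| > 1 − 1/n. -/

import Mathlib

open MeasureTheory FourierTransform Filter Metric
open scoped Pointwise RealInnerProductSpace ENNReal NNReal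

noncomputable section

variable {V : Type*} [NormedAddCommGroup V] [InnerProductSpace ℝ V]
  [FiniteDimensional ℝ V] [MeasurableSpace V] [BorelSpace V]

/-- `f` belongs to the Bernstein space `B_Ω`: it is a continuous bounded function which is the
inverse Fourier transform of a tempered distribution supported in `Ω`, i.e. its distributional
Fourier transform annihilates every test function whose support is disjoint from `Ω`. -/
def MemBernstein (Ω : Set V) (f : V → ℂ) : Prop :=
  Continuous f ∧ (∃ C, ∀ x, ‖f x‖ ≤ C) ∧
    ∀ ψ : V → ℂ, ContDiff ℝ (⊤ : ℕ∞) ψ → HasCompactSupport ψ → tsupport ψ ∩ Ω = ∅ →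
      ∫ x, f x * 𝓕 ψ x = 0

/-- `P` is a sampling set for the Bernstein space `B_Ω`:
`‖f‖_∞ ≤ C · sup_{x ∈ P} ‖f x‖` for all `f ∈ B_Ω`. -/
def IsSamplingSet (Ω P : Set V) : Prop :=
  ∃ C > 0, ∀ f : V → ℂ, MemBernstein Ω f →
    ∀ x : V, ‖f x‖ ≤ C * sSup ((fun p => ‖f p‖) '' P)

/-- A set is uniformly discrete if distinct points are separated by a fixed positive distance. -/
def UniformlyDiscrete {X : Type*} [PseudoMetricSpace X] (Λ : Set X) : Prop :=
  ∃ δ > 0, ∀ x ∈ Λ, ∀ y ∈ Λ, x ≠ y → δ ≤ dist x y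

/-- The lower uniform (Beurling) density of a set:
`D⁻(Λ) = lim_{r→∞} inf_x #(Λ ∩ B_r(x)) / |B_r(x)|`. -/
def lowerUniformDensity {X : Type*} [NormedAddCommGroup X] [MeasureSpace X] (Λ : Set X) : ℝ :=
  liminf (fun r : ℝ => ⨅ x : X,
    (Nat.card ↥(Λ ∩ closedBall x r) : ℝ) / (volume (closedBall x r)).toReal) atTop

/-! A failure of sampling gives functions `g ∈ B_Ω` of sup norm one that are arbitrarily small on
`P`. If `‖g‖ < 1/4` on the ball `‖x‖ ≤ R`, the peak of `g` is already far away. Otherwise `g` cannot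
decay quickly: a reproducing kernel and the continuity of translations in `L¹` show that, for small
`h`, the difference operator `Δ_h` halves sup norms on `B_Ω`, so `Δ_h^m g` is uniformly small, while
it would be close to `± g y` if `g` nearly vanished at `y + h, …, y + m h`. Iterating along a ray in
a direction `e`, one finds a value of `g` bounded below, uniformly in `g`, in a slab
`π R ≤ ⟪e, x⟫ ≤ W`. Multiplication by `(exp (2πi⟪d, x⟫) - 1) ^ N` with `d = (ρ / N) e` enlarges the
spectrum by at most `ρ` and favours the slab over the ball by a factor `2 ^ N`, moving the peak out
of the ball for large `N`; `W` and the lower bound do not depend on `g`, so smallness on `P` can be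
prescribed after `N` is chosen. A translate of `Ω + closedBall 0 ρ` lies in `(1 + ε) • Ω` for small
`ρ`, and translating the spectrum does not change `‖g‖`. -/

open scoped Topology

section Fourier

variable {F : Type*} [NormedAddCommGroup F] [NormedSpace ℂ F]

theorem fourier_fourierChar_inner_smul (ψ : V → F) (x u : V) :
    𝓕 (fun ξ => 𝐞 ⟪ξ, x⟫ • ψ ξ) u = 𝓕 ψ (u - x) := by
  simp only [Real.fourier_eq]
  congr 1 with ξ
  rw [smul_smul, ← AddChar.map_add_eq_mul, inner_sub_right]
  congr 2
  ring

theorem fourier_comp_add_right (ψ : V → F) (c u : V) :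
    𝓕 (fun ξ => ψ (ξ + c)) u = 𝐞 ⟪c, u⟫ • 𝓕 ψ u :=
  congrFun (VectorFourier.fourierIntegral_comp_add_right 𝐞 volume (innerₗ V) ψ c) u

theorem fourier_comp_smul (ψ : V → F) {s : ℝ} (hs : s ≠ 0) (u : V) :
    𝓕 (fun ξ => ψ (s • ξ)) u = |(s ^ Module.finrank ℝ V)⁻¹| • 𝓕 ψ (s⁻¹ • u) := by
  simp only [Real.fourier_eq]
  rw [← Measure.integral_comp_smul]
  congr 1 with ξ
  rw [real_inner_smul_left, real_inner_smul_right, mul_inv_cancel_left₀ hs]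

theorem fourier_sub {ψ φ : V → F} (hψ : Integrable ψ) (hφ : Integrable φ) (u : V) :
    𝓕 (fun ξ => ψ ξ - φ ξ) u = 𝓕 ψ u - 𝓕 φ u := by
  simp only [Real.fourier_eq, smul_sub]
  exact integral_sub ((Real.fourierIntegral_convergent_iff u).2 hψ)
    ((Real.fourierIntegral_convergent_iff u).2 hφ)

theorem integral_mul_fourier_comp_smul (f ψ : V → ℂ) {s : ℝ} (hs : s ≠ 0) :
    ∫ u, f u * 𝓕 (fun ξ => ψ (s • ξ)) u = ∫ u, f (s • u) * 𝓕 ψ u := by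
  have h := Measure.integral_comp_inv_smul volume (fun u => f (s • u) * 𝓕 ψ u) s
  simp only [smul_inv_smul₀ hs] at h
  simp only [fourier_comp_smul ψ hs, mul_smul_comm]
  rw [integral_smul, h, smul_smul, ← abs_mul, inv_mul_cancel₀ (pow_ne_zero _ hs), abs_one, one_smul]

theorem integrable_fourier_of_contDiff {ψ : V → ℂ} (hψ : ContDiff ℝ (⊤ : ℕ∞) ψ)
    (hc : HasCompactSupport ψ) : Integrable (𝓕 ψ) :=
  SchwartzMap.fourier_coe (hc.toSchwartzMap hψ) ▸ (𝓕 (hc.toSchwartzMap hψ)).integrable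

theorem integral_fourier_eq_apply_zero {ψ : V → ℂ} (hψ : ContDiff ℝ (⊤ : ℕ∞) ψ)
    (hc : HasCompactSupport ψ) : ∫ u, 𝓕 ψ u = ψ 0 := by
  have h := congrFun (hψ.continuous.fourierInv_fourier_eq
    (hψ.continuous.integrable_of_hasCompactSupport hc) (integrable_fourier_of_contDiff hψ hc)) 0
  simpa [Real.fourierInv_eq] using h

end Fourier

theorem contDiff_fourierChar_inner {E : Type*} [NormedAddCommGroup E] [InnerProductSpace ℝ E]
    (x : E) : ContDiff ℝ (⊤ : ℕ∞) fun ξ : E => (𝐞 ⟪ξ, x⟫ : ℂ) := by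
  simp only [Real.fourierChar_apply]
  exact (ContDiff.mul (Complex.ofRealCLM.contDiff.comp
    (contDiff_const.mul (contDiff_id.inner ℝ contDiff_const))) contDiff_const).cexp

theorem tendsto_integral_norm_sub_translate {G F : Type*} [AddGroup G] [TopologicalSpace G]
    [IsTopologicalAddGroup G] [MeasurableSpace G] [BorelSpace G] {μ : Measure G}
    [IsLocallyFiniteMeasure μ] [μ.InnerRegularCompactLTTop] [μ.IsAddLeftInvariant]
    [NormedAddCommGroup F] {K : G → F} (hK : Integrable K μ) :
    Tendsto (fun h : G => ∫ u, ‖K (h + u) - K u‖ ∂μ) (𝓝 0) (𝓝 0) := by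
  have hKp : MemLp K 1 μ := memLp_one_iff_integrable.2 hK
  have : Fact ((1 : ℝ≥0∞) ≠ ∞) := ⟨ENNReal.one_ne_top⟩
  have hcont : Continuous fun h : G => DomAddAct.mk h +ᵥ hKp.toLp K :=
    DomAddAct.continuous_mk.vadd continuous_const
  have hdist (h : G) :
      dist (DomAddAct.mk h +ᵥ hKp.toLp K) (hKp.toLp K) = ∫ u, ‖K (h + u) - K u‖ ∂μ := by
    rw [L1.dist_eq_integral_dist, DomAddAct.mk_vadd_toLp]
    refine integral_congr_ae ?_
    filter_upwards [(hKp.comp_measurePreserving (measurePreserving_vadd h μ)).coeFn_toLp,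
      hKp.coeFn_toLp] with u hhu hu
    exact (congrArg₂ dist hhu hu).trans (dist_eq_norm _ _)
  have hlim := (hcont.tendsto 0).dist (tendsto_const_nhds (x := hKp.toLp K))
  rw [DomAddAct.mk_zero, zero_vadd, dist_self] at hlim
  simpa only [hdist] using hlim

theorem tendsto_integral_comp_smul_mul {E : Type*} [NormedAddCommGroup E] [NormedSpace ℝ E]
    [MeasurableSpace E] [OpensMeasurableSpace E] {μ : Measure E} {f K : E → ℂ} (hf : Continuous f)
    {C : ℝ} (hC : ∀ x, ‖f x‖ ≤ C) (hK : Integrable K μ) :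
    Tendsto (fun s : ℝ => ∫ u, f (s • u) * K u ∂μ) (𝓝 0) (𝓝 (f 0 * ∫ u, K u ∂μ)) := by
  rw [← integral_const_mul]
  refine tendsto_integral_filter_of_dominated_convergence (fun u => C * ‖K u‖)
    (.of_forall fun s => ?_) (.of_forall fun s => .of_forall fun u => ?_) (hK.norm.const_mul C)
    (.of_forall fun u => ?_)
  · exact (hf.comp (continuous_const_smul s)).aestronglyMeasurable.mul hK.1
  · rw [norm_mul]
    gcongr
    exact hC _
  · have : Continuous fun s : ℝ => f (s • u) * K u := by fun_prop
    simpa using this.tendsto 0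

namespace MemBernstein

variable {Ω Ω' : Set V} {f g : V → ℂ}

theorem continuous (hf : MemBernstein Ω f) : Continuous f := hf.1

theorem exists_norm_le (hf : MemBernstein Ω f) : ∃ C, ∀ x, ‖f x‖ ≤ C := hf.2.1

theorem integrable_mul (hf : MemBernstein Ω f) {K : V → ℂ} (hK : Integrable K) :
    Integrable fun x => f x * K x :=
  let ⟨_, hC⟩ := hf.exists_norm_le
  hK.bdd_mul hf.continuous.aestronglyMeasurable (.of_forall hC)

theorem mono (hf : MemBernstein Ω f) (h : Ω ⊆ Ω') : MemBernstein Ω' f :=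
  ⟨hf.1, hf.2.1, fun ψ hψ hc hd =>
    hf.2.2 ψ hψ hc (Set.subset_eq_empty (Set.inter_subset_inter_right _ h) hd)⟩

theorem const_mul (hf : MemBernstein Ω f) (a : ℂ) : MemBernstein Ω fun x => a * f x := by
  obtain ⟨hcont, ⟨C, hC⟩, hann⟩ := hf
  refine ⟨continuous_const.mul hcont, ⟨‖a‖ * C, fun x => ?_⟩, fun ψ hψ hc hd => ?_⟩
  · rw [norm_mul]
    gcongr
    exact hC x
  · simp only [mul_assoc]
    rw [integral_const_mul, hann ψ hψ hc hd, mul_zero]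

theorem sub (hf : MemBernstein Ω f) (hg : MemBernstein Ω g) :
    MemBernstein Ω fun x => f x - g x := by
  obtain ⟨C, hC⟩ := hf.exists_norm_le
  obtain ⟨C', hC'⟩ := hg.exists_norm_le
  refine ⟨hf.continuous.sub hg.continuous,
    ⟨C + C', fun x => (norm_sub_le _ _).trans (add_le_add (hC x) (hC' x))⟩, fun ψ hψ hc hd => ?_⟩
  have hint := integrable_fourier_of_contDiff hψ hc
  simp only [sub_mul]
  rw [integral_sub (hf.integrable_mul hint) (hg.integrable_mul hint), hf.2.2 ψ hψ hc hd,
    hg.2.2 ψ hψ hc hd, sub_zero]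

theorem comp_add_right (hf : MemBernstein Ω f) (h : V) : MemBernstein Ω fun x => f (x + h) := by
  obtain ⟨hcont, ⟨C, hC⟩, hann⟩ := hf
  refine ⟨by fun_prop, ⟨C, fun x => hC _⟩, fun ψ hψ hc hd => ?_⟩
  rw [← integral_sub_right_eq_self _ h]
  simp only [sub_add_cancel, ← fourier_fourierChar_inner_smul]
  have hts : tsupport (fun ξ => 𝐞 ⟪ξ, h⟫ • ψ ξ) ⊆ tsupport ψ :=
    closure_mono fun ξ hξ h0 => hξ (by simp only [h0, smul_zero])
  refine hann _ ?_ (hc.of_isClosed_subset (isClosed_tsupport _) hts)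
    (Set.subset_eq_empty (Set.inter_subset_inter_left _ hts) hd)
  simp only [Circle.smul_def, smul_eq_mul]
  exact (contDiff_fourierChar_inner h).mul hψ

theorem fourierChar_mul (hf : MemBernstein Ω f) (c : V) :
    MemBernstein (c +ᵥ Ω) fun x => (𝐞 ⟪c, x⟫ : ℂ) * f x := by
  obtain ⟨hcont, ⟨C, hC⟩, hann⟩ := hf
  refine ⟨?_, ⟨C, fun x => by rw [norm_mul, Circle.norm_coe, one_mul]; exact hC x⟩,
    fun ψ hψ hc hd => ?_⟩
  · have h := (contDiff_fourierChar_inner c).continuous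
    simp only [real_inner_comm c] at h
    exact h.mul hcont
  · have hts : tsupport (fun ξ => ψ (ξ + c)) ∩ Ω = ∅ := by
      rw [show tsupport (fun ξ => ψ (ξ + c)) = (Homeomorph.addRight c) ⁻¹' tsupport ψ from
        tsupport_comp_eq_preimage ψ (Homeomorph.addRight c), Set.eq_empty_iff_forall_notMem]
      rintro ξ ⟨hξ, hΩ⟩
      refine (Set.eq_empty_iff_forall_notMem.1 hd) (ξ + c) ⟨hξ, ?_⟩
      exact ⟨ξ, hΩ, add_comm c ξ⟩
    rw [← hann (fun ξ => ψ (ξ + c)) (hψ.comp (contDiff_id.add contDiff_const))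
      (hc.comp_homeomorph (Homeomorph.addRight c)) hts]
    congr 1 with x
    rw [fourier_comp_add_right, Circle.smul_def, smul_eq_mul]
    ring

theorem integral_mul_fourier_congr (hf : MemBernstein Ω f) {ψ φ : V → ℂ}
    (hψ : ContDiff ℝ (⊤ : ℕ∞) ψ) (hψc : HasCompactSupport ψ)
    (hφ : ContDiff ℝ (⊤ : ℕ∞) φ) (hφc : HasCompactSupport φ)
    {U : Set V} (hU : IsOpen U) (hΩU : Ω ⊆ U) (hψφ : Set.EqOn ψ φ U) :
    ∫ u, f u * 𝓕 ψ u = ∫ u, f u * 𝓕 φ u := by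
  have hts : tsupport (fun ξ => ψ ξ - φ ξ) ⊆ Uᶜ :=
    closure_minimal (fun ξ hξ hξU => hξ (sub_eq_zero.2 (hψφ hξU))) hU.isClosed_compl
  have h := hf.2.2 _ (hψ.sub hφ) (hψc.sub hφc)
    (Set.disjoint_iff_inter_eq_empty.1 (Set.disjoint_of_subset hts hΩU disjoint_compl_left))
  simp only [fourier_sub (hψ.continuous.integrable_of_hasCompactSupport hψc)
    (hφ.continuous.integrable_of_hasCompactSupport hφc), mul_sub] at h
  rwa [integral_sub (hf.integrable_mul (integrable_fourier_of_contDiff hψ hψc))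
    (hf.integrable_mul (integrable_fourier_of_contDiff hφ hφc)), sub_eq_zero] at h

/- The dilates `χ (s • ·)`, `s ≤ 1`, agree with `χ` near the spectrum of `f`, while their Fourier
transforms form an approximate identity as `s → 0`. -/
theorem apply_eq_integral_mul_fourier (hf : MemBernstein Ω f) {χ : V → ℂ}
    (hχ : ContDiff ℝ (⊤ : ℕ∞) χ) (hχc : HasCompactSupport χ) {R : ℝ} (hR : 0 < R)
    (hΩ : Ω ⊆ ball 0 R) (hχ1 : ∀ ξ ∈ ball 0 R, χ ξ = 1) (x : V) :
    f x = ∫ u, f (u + x) * 𝓕 χ u := by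
  have hfx := hf.comp_add_right x
  obtain ⟨C, hC⟩ := hfx.exists_norm_le
  have hlim : Tendsto (fun s : ℝ => ∫ u, f (s • u + x) * 𝓕 χ u) (𝓝[>] 0) (𝓝 (f x)) := by
    have h := tendsto_integral_comp_smul_mul hfx.continuous hC
      (integrable_fourier_of_contDiff hχ hχc)
    rw [integral_fourier_eq_apply_zero hχ hχc, hχ1 0 (mem_ball_self hR), mul_one, zero_add] at h
    exact h.mono_left nhdsWithin_le_nhds
  refine tendsto_nhds_unique hlim (tendsto_const_nhds.congr' ?_)
  filter_upwards [Ioc_mem_nhdsGT one_pos] with s ⟨hs0, hs1⟩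
  rw [← integral_mul_fourier_comp_smul (fun u => f (u + x)) χ hs0.ne']
  refine hfx.integral_mul_fourier_congr hχ hχc (hχ.comp (contDiff_const_smul s))
    (hχc.comp_homeomorph (Homeomorph.smulOfNeZero s hs0.ne')) isOpen_ball hΩ fun ξ hξ => ?_
  rw [hχ1 ξ hξ, hχ1 (s • ξ)]
  rw [mem_ball_zero_iff, norm_smul, Real.norm_of_nonneg hs0.le] at *
  exact (mul_le_of_le_one_left (norm_nonneg ξ) hs1).trans_lt hξ

end MemBernstein

theorem exists_reproducing_kernel {Ω : Set V} (hΩ : Bornology.IsBounded Ω) :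
    ∃ K : V → ℂ, Integrable K ∧ ∀ f, MemBernstein Ω f → ∀ x, f x = ∫ u, f (u + x) * K u := by
  obtain ⟨R, hR, hΩR⟩ := hΩ.subset_ball_lt 0 0
  let χ : ContDiffBump (0 : V) := ⟨R, R + 1, hR, lt_add_one R⟩
  have hχ : ContDiff ℝ (⊤ : ℕ∞) fun ξ => (χ ξ : ℂ) := Complex.ofRealCLM.contDiff.comp χ.contDiff
  have hχc : HasCompactSupport fun ξ => (χ ξ : ℂ) :=
    χ.hasCompactSupport.comp_left Complex.ofReal_zero
  refine ⟨_, integrable_fourier_of_contDiff hχ hχc, fun f hf x =>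
    hf.apply_eq_integral_mul_fourier hχ hχc hR hΩR (fun ξ hξ => ?_) x⟩
  rw [χ.one_of_mem_closedBall (ball_subset_closedBall hξ), Complex.ofReal_one]

theorem eventually_norm_sub_le_of_memBernstein {Ω : Set V} (hΩ : Bornology.IsBounded Ω)
    {ε : ℝ} (hε : 0 < ε) :
    ∀ᶠ h in 𝓝 (0 : V), ∀ f, MemBernstein Ω f → ∀ M, (∀ x, ‖f x‖ ≤ M) →
      ∀ x, ‖f (x + h) - f x‖ ≤ ε * M := by
  obtain ⟨K, hK, hrep⟩ := exists_reproducing_kernel hΩ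
  have hsmall : ∀ᶠ h in 𝓝 (0 : V), ∫ u, ‖K (-h + u) - K u‖ < ε :=
    ((tendsto_integral_norm_sub_translate hK).comp (by simpa using tendsto_neg (0 : V))).eventually
      (gt_mem_nhds hε)
  filter_upwards [hsmall] with h hh f hf M hM x
  have hfx := hf.comp_add_right x
  have hKh : Integrable fun u => K (-h + u) := hK.comp_add_left (-h)
  have hdiff : f (x + h) - f x = ∫ u, f (u + x) * (K (-h + u) - K u) := by
    have hshift : f (x + h) = ∫ u, f (u + x) * K (-h + u) := by
      rw [hrep f hf, ← integral_add_left_eq_self (fun u => f (u + x) * K (-h + u)) h]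
      simp only [neg_add_cancel_left, add_rotate h _ x, add_assoc]
    simp only [mul_sub]
    rw [integral_sub (hfx.integrable_mul hKh) (hfx.integrable_mul hK), ← hrep f hf, ← hshift]
  calc ‖f (x + h) - f x‖ ≤ ∫ u, M * ‖K (-h + u) - K u‖ := by
        rw [hdiff]
        refine norm_integral_le_of_norm_le ((hKh.sub hK).norm.const_mul M) (.of_forall fun u => ?_)
        rw [norm_mul]
        gcongr
        exact hM _
    _ = (∫ u, ‖K (-h + u) - K u‖) * M := by rw [integral_const_mul, mul_comm]
    _ ≤ ε * M := mul_le_mul_of_nonneg_right hh.le ((norm_nonneg _).trans (hM 0))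

theorem norm_le_norm_fwdDiff_iter_add {E F : Type*} [AddCommMonoid E] [NormedAddCommGroup F]
    (f : E → F) (h y : E) (m : ℕ) {c : ℝ} (hc : ∀ j ∈ Set.Icc 1 m, ‖f (y + j • h)‖ ≤ c) :
    ‖f y‖ ≤ ‖(fwdDiff h)^[m] f y‖ + (2 ^ m - 1) * c := by
  induction m generalizing f c with
  | zero => simp
  | succ m ih =>
    have hdiff : ∀ j ∈ Set.Icc 1 m, ‖fwdDiff h f (y + j • h)‖ ≤ c + c := fun j ⟨hj, hjm⟩ => by
      have hsucc := hc (j + 1) ⟨by lia, by lia⟩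
      rw [succ_nsmul, ← add_assoc] at hsucc
      exact norm_sub_le_of_le hsucc (hc j ⟨hj, by lia⟩)
    have hone := hc 1 ⟨le_rfl, by lia⟩
    rw [one_nsmul] at hone
    calc ‖f y‖ ≤ ‖f (y + h)‖ + ‖fwdDiff h f y‖ := norm_le_insert _ _
      _ ≤ c + (‖(fwdDiff h)^[m] (fwdDiff h f) y‖ + (2 ^ m - 1) * (c + c)) :=
        add_le_add hone (ih _ hdiff)
      _ = ‖(fwdDiff h)^[m + 1] f y‖ + (2 ^ (m + 1) - 1) * c := by
        rw [Function.iterate_succ_apply]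
        ring

section FarValues

variable {Ω : Set V}

theorem MemBernstein.norm_fwdDiff_iter_le {h : V} {q : ℝ}
    (hq : ∀ f, MemBernstein Ω f → ∀ M, (∀ x, ‖f x‖ ≤ M) → ∀ x, ‖f (x + h) - f x‖ ≤ q * M)
    {f : V → ℂ} (hf : MemBernstein Ω f) {M : ℝ} (hM : ∀ x, ‖f x‖ ≤ M) (m : ℕ) (x : V) :
    ‖(fwdDiff h)^[m] f x‖ ≤ q ^ m * M := by
  induction m generalizing f M with
  | zero => simpa using hM x
  | succ m ih =>
    rw [Function.iterate_succ_apply, pow_succ, mul_assoc]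
    exact ih ((hf.comp_add_right h).sub hf) (hq f hf M hM)

theorem exists_le_norm_add_nsmul {h : V} {q : ℝ} (hq1 : q < 1)
    (hq : ∀ f, MemBernstein Ω f → ∀ M, (∀ x, ‖f x‖ ≤ M) → ∀ x, ‖f (x + h) - f x‖ ≤ q * M)
    {a : ℝ} (ha : 0 < a) :
    ∃ m : ℕ, ∃ c > 0, ∀ f, MemBernstein Ω f → (∀ x, ‖f x‖ ≤ 1) → ∀ y, a ≤ ‖f y‖ →
      ∃ j ∈ Set.Icc 1 m, c ≤ ‖f (y + j • h)‖ := by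
  obtain ⟨m, hm⟩ := exists_pow_lt_of_lt_one (half_pos ha) hq1
  refine ⟨m, a / 2 / 2 ^ m, by positivity, fun f hf hf1 y hy => ?_⟩
  by_contra! hsmall
  have hiter := hf.norm_fwdDiff_iter_le hq hf1 m y
  have hbound := norm_le_norm_fwdDiff_iter_add f h y m fun j hj => (hsmall j hj).le
  have hsum : (2 ^ m - 1) * (a / 2 / 2 ^ m) ≤ a / 2 :=
    calc (2 ^ m - 1) * (a / 2 / 2 ^ m) ≤ 2 ^ m * (a / 2 / 2 ^ m) := by gcongr; linarith
      _ = a / 2 := mul_div_cancel₀ _ (by positivity)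
  linarith

theorem exists_le_norm_add_nsmul_of_le {h : V} {q : ℝ} (hq1 : q < 1)
    (hq : ∀ f, MemBernstein Ω f → ∀ M, (∀ x, ‖f x‖ ≤ M) → ∀ x, ‖f (x + h) - f x‖ ≤ q * M)
    {a : ℝ} (ha : 0 < a) (k : ℕ) :
    ∃ m : ℕ, ∃ c > 0, ∀ f, MemBernstein Ω f → (∀ x, ‖f x‖ ≤ 1) → ∀ y, a ≤ ‖f y‖ →
      ∃ j ∈ Set.Icc k m, c ≤ ‖f (y + j • h)‖ := by
  induction k with
  | zero => exact ⟨0, a, ha, fun f _ _ y hy => ⟨0, ⟨le_rfl, le_rfl⟩, by simpa using hy⟩⟩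
  | succ k ih =>
    obtain ⟨m, c, hc, hm⟩ := ih
    obtain ⟨m', c', hc', hm'⟩ := exists_le_norm_add_nsmul hq1 hq hc
    refine ⟨m + m', c', hc', fun f hf hf1 y hy => ?_⟩
    obtain ⟨j, ⟨hkj, hjm⟩, hj⟩ := hm f hf hf1 y hy
    obtain ⟨i, ⟨hi, him⟩, hij⟩ := hm' f hf hf1 _ hj
    exact ⟨j + i, ⟨by lia, by lia⟩, by rwa [add_nsmul, ← add_assoc]⟩

theorem exists_le_norm_of_inner_mem_Icc (hΩ : Bornology.IsBounded Ω) {e : V} (he : ‖e‖ = 1)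
    {a : ℝ} (ha : 0 < a) (R S : ℝ) :
    ∃ W : ℝ, ∃ c > 0, ∀ f, MemBernstein Ω f → (∀ x, ‖f x‖ ≤ 1) → ∀ y, ‖y‖ ≤ R → a ≤ ‖f y‖ →
      ∃ z, ⟪e, z⟫ ∈ Set.Icc S W ∧ c ≤ ‖f z‖ := by
  have hlim : Tendsto (fun t : ℝ => t • e) (𝓝[>] 0) (𝓝 0) := by
    have : Continuous fun t : ℝ => t • e := by fun_prop
    simpa using (this.tendsto 0).mono_left nhdsWithin_le_nhds
  obtain ⟨t, hcontr, (ht : 0 < t)⟩ := ((hlim.eventually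
    (eventually_norm_sub_le_of_memBernstein hΩ one_half_pos)).and self_mem_nhdsWithin).exists
  obtain ⟨k, hk⟩ := exists_nat_ge ((R + S) / t)
  rw [div_le_iff₀ ht] at hk
  obtain ⟨m, c, hc, hm⟩ := exists_le_norm_add_nsmul_of_le one_half_lt_one hcontr ha k
  refine ⟨R + m * t, c, hc, fun f hf hf1 y hyR hy => ?_⟩
  obtain ⟨j, ⟨hkj, hjm⟩, hj⟩ := hm f hf hf1 y hy
  refine ⟨_, ?_, hj⟩
  have hinner : ⟪e, y + j • t • e⟫ = ⟪e, y⟫ + j * t := by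
    rw [inner_add_right, ← Nat.cast_smul_eq_nsmul ℝ, real_inner_smul_right,
      real_inner_smul_right, real_inner_self_eq_norm_sq, he, one_pow, mul_one]
  have hey : |⟪e, y⟫| ≤ R := (abs_real_inner_le_norm e y).trans (by rwa [he, one_mul])
  have hkj : (k : ℝ) * t ≤ j * t := by gcongr
  have hjm : (j : ℝ) * t ≤ m * t := by gcongr
  rw [hinner]
  constructor <;> linarith [abs_le.1 hey]

end FarValues

section Modulation

theorem norm_fourierChar_sub_one (t : ℝ) : ‖(𝐞 t : ℂ) - 1‖ = 2 * |Real.sin (Real.pi * t)| := by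
  rw [Real.fourierChar_apply, mul_comm _ Complex.I, Complex.norm_exp_I_mul_ofReal_sub_one,
    norm_mul, Real.norm_two, Real.norm_eq_abs, mul_assoc, mul_div_cancel_left₀ _ two_ne_zero]

theorem norm_fourierChar_sub_one_le (t : ℝ) : ‖(𝐞 t : ℂ) - 1‖ ≤ 2 * Real.pi * |t| := by
  have h : |Real.sin (Real.pi * t)| ≤ Real.pi * |t| :=
    Real.abs_sin_le_abs.trans_eq (by rw [abs_mul, abs_of_pos Real.pi_pos])
  rw [norm_fourierChar_sub_one, mul_assoc]
  gcongr

theorem norm_fourierChar_sub_one_le_two (t : ℝ) : ‖(𝐞 t : ℂ) - 1‖ ≤ 2 := by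
  rw [norm_fourierChar_sub_one]
  linarith [Real.abs_sin_le_one (Real.pi * t)]

theorem four_mul_le_norm_fourierChar_sub_one {t : ℝ} (ht : |t| ≤ 1 / 2) :
    4 * |t| ≤ ‖(𝐞 t : ℂ) - 1‖ := by
  have hπ : |Real.pi * t| = Real.pi * |t| := by rw [abs_mul, abs_of_pos Real.pi_pos]
  have h := Real.mul_abs_le_abs_sin (x := Real.pi * t) (by rw [hπ]; nlinarith [Real.pi_pos])
  have hcancel : 2 / Real.pi * (Real.pi * |t|) = 2 * |t| := by field_simp
  rw [hπ, hcancel] at h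
  rw [norm_fourierChar_sub_one]
  linarith

/- As `2 |u| / π ≤ |sin u| ≤ |u|` for `|u| ≤ π / 2`, starting the slab at distance `π R` makes
`|sin|` at least twice as large there as on the ball, hence `2 ^ N` times after raising it to the
power `N`. -/
theorem exists_fourierChar_sub_one_pow_bounds {E : Type*} [NormedAddCommGroup E]
    [InnerProductSpace ℝ E] {e : E} (he : ‖e‖ = 1) {R ρ c : ℝ} (hR : 0 < R) (hρ : 0 < ρ)
    (hc : 0 < c) (W : ℝ) :
    ∃ (d : E) (N : ℕ), ∃ b > 0, N * ‖d‖ ≤ ρ ∧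
      (∀ x, ‖x‖ ≤ R → ‖(𝐞 ⟪d, x⟫ : ℂ) - 1‖ ^ N ≤ b * c / 2) ∧
      ∀ x, ⟪e, x⟫ ∈ Set.Icc (Real.pi * R) W → b ≤ ‖(𝐞 ⟪d, x⟫ : ℂ) - 1‖ ^ N := by
  obtain ⟨N, hNc, hNW, hN⟩ :=
    (((tendsto_pow_atTop_atTop_of_one_lt one_lt_two).eventually_ge_atTop (2 / c)).and
      ((tendsto_natCast_atTop_atTop.eventually_ge_atTop (2 * ρ * W)).and
        (tendsto_natCast_atTop_atTop.eventually_gt_atTop (0 : ℝ)))).exists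
  set η := ρ / N
  have hη : 0 < η := by positivity
  have hNη : N * η = ρ := mul_div_cancel₀ ρ hN.ne'
  have hηW : η * W ≤ 1 / 2 := by
    rw [div_mul_eq_mul_div, div_le_iff₀ hN]
    linarith
  have hd : ‖η • e‖ = η := by rw [norm_smul, he, Real.norm_of_nonneg hη.le, mul_one]
  refine ⟨η • e, N, (4 * Real.pi * η * R) ^ N, by positivity, by rw [hd, hNη],
    fun x hx => ?_, fun x ⟨hxR, hxW⟩ => ?_⟩
  · have hdx : |⟪η • e, x⟫| ≤ η * R := (abs_real_inner_le_norm _ x).trans (by rw [hd]; gcongr)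
    calc ‖(𝐞 ⟪η • e, x⟫ : ℂ) - 1‖ ^ N ≤ (2 * Real.pi * (η * R)) ^ N := by
          gcongr
          exact (norm_fourierChar_sub_one_le _).trans (by gcongr)
      _ = (4 * Real.pi * η * R) ^ N / 2 ^ N := by rw [← div_pow]; ring
      _ ≤ (4 * Real.pi * η * R) ^ N / (2 / c) := by gcongr
      _ = (4 * Real.pi * η * R) ^ N * c / 2 := by rw [div_div_eq_mul_div]
  · have hx0 : 0 ≤ ⟪e, x⟫ := le_trans (by positivity) hxR
    have habs : |⟪η • e, x⟫| = η * ⟪e, x⟫ := by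
      rw [real_inner_smul_left, abs_of_nonneg (by positivity)]
    gcongr
    calc 4 * Real.pi * η * R = 4 * (η * (Real.pi * R)) := by ring
      _ ≤ 4 * |⟪η • e, x⟫| := by rw [habs]; gcongr
      _ ≤ ‖(𝐞 ⟪η • e, x⟫ : ℂ) - 1‖ := four_mul_le_norm_fourierChar_sub_one <| by
        rw [habs]
        exact le_trans (by gcongr) hηW

end Modulation

namespace MemBernstein

variable {Ω : Set V} {f : V → ℂ}

theorem fourierChar_sub_one_mul (hf : MemBernstein Ω f) (d : V) :
    MemBernstein (Ω + closedBall 0 ‖d‖) fun x => ((𝐞 ⟪d, x⟫ : ℂ) - 1) * f x := by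
  have hmod : d +ᵥ Ω ⊆ Ω + closedBall 0 ‖d‖ := by
    rintro _ ⟨ξ, hξ, rfl⟩
    exact ⟨ξ, hξ, d, mem_closedBall_zero_iff.2 le_rfl, add_comm ξ d⟩
  simp only [sub_one_mul]
  exact ((hf.fourierChar_mul d).mono hmod).sub
    (hf.mono (Set.subset_add_left Ω (mem_closedBall_self (norm_nonneg d))))

theorem fourierChar_sub_one_pow_mul (hf : MemBernstein Ω f) (d : V) (N : ℕ) :
    MemBernstein (Ω + closedBall 0 (N * ‖d‖)) fun x => ((𝐞 ⟪d, x⟫ : ℂ) - 1) ^ N * f x := by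
  induction N with
  | zero => simpa using hf
  | succ N ih =>
    have h := ih.fourierChar_sub_one_mul d
    rw [add_assoc, closedBall_add_closedBall (by positivity) (norm_nonneg d), add_zero] at h
    simpa only [pow_succ', mul_assoc, Nat.cast_succ, add_one_mul] using h

end MemBernstein

/-- `B_Ω` contains a function of sup norm one which is smaller than `κ` on `P` and exceeds `1 - κ`
somewhere outside the ball of radius `R`. The pair `f_n`, `x_n` of the paper is the case `R = n`,
`κ = 1/n`. -/
def HasFarPeak (Ω P : Set V) (R κ : ℝ) : Prop :=
  ∃ (f : V → ℂ) (x : V), MemBernstein Ω f ∧ R < ‖x‖ ∧ sSup (Set.range fun y => ‖f y‖) = 1 ∧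
    sSup ((fun y => ‖f y‖) '' P) < κ ∧ 1 - κ < ‖f x‖

theorem HasFarPeak.of_vadd_subset {Ω Ω' P : Set V} {R κ : ℝ} (h : HasFarPeak Ω P R κ) {c : V}
    (hc : c +ᵥ Ω ⊆ Ω') : HasFarPeak Ω' P R κ := by
  obtain ⟨f, x, hf, h⟩ := h
  refine ⟨_, x, (hf.fourierChar_mul c).mono hc, ?_⟩
  simpa only [norm_mul, Circle.norm_coe, one_mul] using h

theorem exists_isLUB_range_mul_one {ι : Type*} {u : ι → ℝ} (hu : BddAbove (Set.range u)) {i : ι}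
    (hi : 0 < u i) : ∃ a > 0, IsLUB (Set.range fun j => a * u j) 1 := by
  have hlub := isLUB_csSup ⟨u i, Set.mem_range_self i⟩ hu
  have hpos : 0 < sSup (Set.range u) := hi.trans_le (hlub.1 ⟨i, rfl⟩)
  refine ⟨_, inv_pos.2 hpos, ?_⟩
  have h := hlub.mul_left (inv_pos.2 hpos).le
  rwa [inv_mul_cancel₀ hpos.ne', ← Set.range_comp] at h

theorem MemBernstein.exists_isLUB_norm_one {Ω : Set V} {f : V → ℂ} (hf : MemBernstein Ω f) {z : V}
    (hz : 0 < ‖f z‖) :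
    ∃ a : ℝ, 0 < a ∧ MemBernstein Ω (fun y => (a : ℂ) * f y) ∧
      (∀ y, ‖(a : ℂ) * f y‖ = a * ‖f y‖) ∧ IsLUB (Set.range fun y => ‖(a : ℂ) * f y‖) 1 := by
  obtain ⟨C, hC⟩ := hf.exists_norm_le
  obtain ⟨a, ha, hlub⟩ := exists_isLUB_range_mul_one ⟨C, Set.forall_mem_range.2 hC⟩ hz
  have hnorm (y : V) : ‖(a : ℂ) * f y‖ = a * ‖f y‖ := by rw [norm_mul, Complex.norm_of_nonneg ha.le]
  exact ⟨a, ha, hf.const_mul a, hnorm, by simpa only [hnorm] using hlub⟩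

theorem MemBernstein.hasFarPeak {Ω P : Set V} {f : V → ℂ} (hf : MemBernstein Ω f) {R κ m δ : ℝ}
    (hm : 0 < m) {z : V} (hz : m ≤ ‖f z‖) (hR : ∀ y, ‖y‖ ≤ R → ‖f y‖ ≤ m / 2)
    (hP : ∀ p ∈ P, ‖f p‖ ≤ δ) (hδ : 0 ≤ δ) (hδκ : δ < κ * m) : HasFarPeak Ω P R κ := by
  obtain ⟨a, ha, hg, hnorm, hlub⟩ := hf.exists_isLUB_norm_one (hm.trans_le hz)
  have ham : a * m ≤ 1 :=
    calc a * m ≤ a * ‖f z‖ := by gcongr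
      _ ≤ 1 := hnorm z ▸ hlub.1 ⟨z, rfl⟩
  have hκ : 0 < κ := pos_of_mul_pos_left (hδ.trans_lt hδκ) hm.le
  obtain ⟨_, ⟨x, rfl⟩, hx, -⟩ := hlub.exists_between
    (max_lt one_half_lt_one (sub_lt_self 1 hκ) : max (1 / 2) (1 - κ) < 1)
  obtain ⟨hx_half, hx_peak⟩ : 1 / 2 < a * ‖f x‖ ∧ 1 - κ < ‖(a : ℂ) * f x‖ :=
    hnorm x ▸ max_lt_iff.1 hx
  refine ⟨_, x, hg, ?_, hlub.csSup_eq (Set.range_nonempty _), ?_, hx_peak⟩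
  · by_contra! hxR
    have : a * ‖f x‖ ≤ a * (m / 2) := by gcongr; exact hR x hxR
    linarith
  · have hPa : sSup ((fun y => ‖(a : ℂ) * f y‖) '' P) ≤ a * δ := by
      refine Real.sSup_le ?_ (by positivity)
      refine Set.forall_mem_image.2 fun p hp => ?_
      rw [hnorm]
      gcongr
      exact hP p hp
    calc sSup ((fun y => ‖(a : ℂ) * f y‖) '' P) ≤ a * δ := hPa
      _ < a * (κ * m) := by gcongr
      _ = κ * (a * m) := mul_left_comm _ _ _
      _ ≤ κ := mul_le_of_le_one_right hκ.le ham

theorem exists_isLUB_norm_one_of_not_isSamplingSet {Ω P : Set V} (hP : ¬ IsSamplingSet Ω P)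
    {δ : ℝ} (hδ : 0 < δ) :
    ∃ g, MemBernstein Ω g ∧ IsLUB (Set.range fun x => ‖g x‖) 1 ∧ ∀ p ∈ P, ‖g p‖ ≤ δ := by
  obtain ⟨f, hf, x, hx⟩ : ∃ f, MemBernstein Ω f ∧
      ∃ x, δ⁻¹ * sSup ((fun p => ‖f p‖) '' P) < ‖f x‖ := by
    by_contra! h
    exact hP ⟨δ⁻¹, inv_pos.2 hδ, h⟩
  have hx0 : 0 < ‖f x‖ := by
    refine lt_of_le_of_lt (mul_nonneg (inv_pos.2 hδ).le (Real.sSup_nonneg ?_)) hx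
    rintro _ ⟨p, -, rfl⟩
    exact norm_nonneg _
  obtain ⟨a, ha, hg, hnorm, hlub⟩ := hf.exists_isLUB_norm_one hx0
  obtain ⟨C, hC⟩ := hf.exists_norm_le
  have hbdd : BddAbove ((fun p => ‖f p‖) '' P) := ⟨C, Set.forall_mem_image.2 fun p _ => hC p⟩
  refine ⟨_, hg, hlub, fun p hp => ?_⟩
  calc ‖(a : ℂ) * f p‖ = a * ‖f p‖ := hnorm p
    _ ≤ a * (δ * ‖f x‖) := by
      gcongr
      exact (le_csSup hbdd ⟨p, hp, rfl⟩).trans ((inv_mul_lt_iff₀ hδ).1 hx).le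
    _ = δ * ‖(a : ℂ) * f x‖ := by rw [hnorm, mul_left_comm]
    _ ≤ δ := mul_le_of_le_one_right hδ.le (hlub.1 ⟨x, rfl⟩)

theorem hasFarPeak_add_closedBall_of_not_isSamplingSet [Nontrivial V] {Ω P : Set V}
    (hΩ : Bornology.IsBounded Ω) (hP : ¬ IsSamplingSet Ω P) {ρ R κ : ℝ} (hρ : 0 < ρ) (hR : 0 < R)
    (hκ : 0 < κ) : HasFarPeak (Ω + closedBall 0 ρ) P R κ := by
  obtain ⟨e, he⟩ := exists_norm_eq V zero_le_one
  obtain ⟨W, c, hc, hslab⟩ :=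
    exists_le_norm_of_inner_mem_Icc hΩ he (a := 1 / 4) (by norm_num) R (Real.pi * R)
  obtain ⟨d, N, b, hb, hd, hball, hfar⟩ := exists_fourierChar_sub_one_pow_bounds he hR hρ hc W
  obtain ⟨δ, hδ0, hδ⟩ : ∃ δ, 0 < δ ∧ δ < min (κ * (1 / 2)) (κ * (b * c) / 2 ^ N) :=
    exists_between (by positivity)
  rw [lt_min_iff, lt_div_iff₀' (by positivity)] at hδ
  obtain ⟨g, hg, hlub, hgP⟩ := exists_isLUB_norm_one_of_not_isSamplingSet hP hδ0
  have hg1 (x : V) : ‖g x‖ ≤ 1 := hlub.1 ⟨x, rfl⟩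
  by_cases hcentral : ∃ y, ‖y‖ ≤ R ∧ 1 / 4 ≤ ‖g y‖
  · obtain ⟨y, hyR, hy⟩ := hcentral
    obtain ⟨z, hz, hgz⟩ := hslab g hg hg1 y hyR hy
    have hsub : closedBall (0 : V) (N * ‖d‖) ⊆ closedBall 0 ρ := closedBall_subset_closedBall hd
    refine ((hg.fourierChar_sub_one_pow_mul d N).mono (Set.add_subset_add_left hsub)).hasFarPeak
      (m := b * c) (δ := 2 ^ N * δ) (z := z) (by positivity) ?_ (fun x hx => ?_)
      (fun p hp => ?_) (by positivity) hδ.2 <;> rw [norm_mul, norm_pow]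
    · gcongr
      exact hfar z hz
    · exact (mul_le_of_le_one_right (by positivity) (hg1 x)).trans (hball x hx)
    · gcongr
      exacts [norm_fourierChar_sub_one_le_two _, hgP p hp]
  · push Not at hcentral
    obtain ⟨_, ⟨z, rfl⟩, hz, -⟩ := hlub.exists_between one_half_lt_one
    have hsub := Set.subset_add_left Ω (mem_closedBall_self (x := (0 : V)) hρ.le)
    refine (hg.mono hsub).hasFarPeak one_half_pos hz.le (fun y hy => ?_) hgP hδ0.le hδ.1
    linarith [hcentral y hy]

theorem exists_vadd_add_closedBall_subset_smul {E : Type*} [SeminormedAddCommGroup E]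
    [NormedSpace ℝ E] {Ω : Set E} (hΩ : Convex ℝ Ω) (hint : (interior Ω).Nonempty) {ε : ℝ}
    (hε : 0 < ε) :
    ∃ ρ > 0, ∃ c : E, c +ᵥ (Ω + closedBall 0 ρ) ⊆ (1 + ε) • Ω := by
  obtain ⟨b, hb⟩ := hint
  obtain ⟨r, hr, hball⟩ := nhds_basis_closedBall.mem_iff.1 (mem_interior_iff_mem_nhds.1 hb)
  refine ⟨ε * r, by positivity, ε • b, ?_⟩
  calc ε • b +ᵥ (Ω + closedBall 0 (ε * r)) = Ω + ε • closedBall b r := by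
        rw [← add_vadd_comm, vadd_closedBall, vadd_eq_add, add_zero, smul_closedBall' hε.ne',
          Real.norm_of_nonneg hε.le]
    _ ⊆ Ω + ε • Ω := by gcongr
    _ = (1 + ε) • Ω := by rw [hΩ.add_smul zero_le_one hε.le, one_smul]

theorem interior_nonempty_of_convex_of_measure_pos {E : Type*} [NormedAddCommGroup E]
    [NormedSpace ℝ E] [FiniteDimensional ℝ E] [MeasurableSpace E] [BorelSpace E] {μ : Measure E}
    [μ.IsAddHaarMeasure] {Ω : Set E} (hΩ : Convex ℝ Ω) (hpos : 0 < μ Ω) :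
    (interior Ω).Nonempty := by
  by_contra! hempty
  refine hpos.ne' (measure_mono_null ?_ (hΩ.addHaar_frontier μ))
  rw [frontier, hempty, Set.sdiff_empty]
  exact subset_closure

theorem not_sampling_exists_far_peak_general [Nontrivial V] {Ω P : Set V}
    (hΩ : Bornology.IsBounded Ω) (hconv : Convex ℝ Ω) (hpos : 0 < volume Ω)
    (hP : ¬ IsSamplingSet Ω P) {R κ ε : ℝ} (hR : 0 < R) (hκ : 0 < κ) (hε : 0 < ε) :
    HasFarPeak ((1 + ε) • Ω) P R κ := by
  obtain ⟨ρ, hρ, c, hsub⟩ := exists_vadd_add_closedBall_subset_smul hconv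
    (interior_nonempty_of_convex_of_measure_pos hconv hpos) hε
  exact (hasFarPeak_add_closedBall_of_not_isSamplingSet hΩ hP hρ hR hκ).of_vadd_subset hsub

/-- Lemma 4: if `P = Q·∂D` is not a sampling set for `B_Ω`, then for every `n ∈ ℕ` and `ε > 0`
there exist `f_n ∈ B_{(1+ε)Ω}` and a point `x_n` with `|x_n| > n`, `‖f_n‖_∞ = 1`,
`sup_P |f_n| < 1/n` and `|f_n(x_n)| > 1 − 1/n`. -/
theorem not_sampling_exists_far_peak
    (Ω : Set (EuclideanSpace ℝ (Fin 2))) (hΩcompact : IsCompact Ω) (hΩconvex : Convex ℝ Ω)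
    (hΩpos : 0 < volume Ω)
    (D : Set (EuclideanSpace ℝ (Fin 2))) (hDclosed : IsClosed D) (hDconvex : Convex ℝ D)
    (hDpos : 0 < volume D) (hDfin : volume D < ⊤) (hD0 : 0 ∈ interior D)
    (Q : Set ℝ) (hQpos : Q ⊆ Set.Ioi 0) (hQud : UniformlyDiscrete Q)
    (P : Set (EuclideanSpace ℝ (Fin 2))) (hP : P = {x | ∃ q ∈ Q, ∃ w ∈ frontier D, x = q • w})
    (hnot : ¬ IsSamplingSet Ω P) :
    ∀ n : ℕ, 0 < n → ∀ ε : ℝ, 0 < ε →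
      ∃ f : EuclideanSpace ℝ (Fin 2) → ℂ, ∃ x : EuclideanSpace ℝ (Fin 2),
        MemBernstein ((1 + ε) • Ω) f ∧ (n : ℝ) < ‖x‖ ∧
          sSup (Set.range fun y => ‖f y‖) = 1 ∧
          sSup ((fun y => ‖f y‖) '' P) < 1 / n ∧
          1 - 1 / n < ‖f x‖ := by
  intro n hn ε hε
  exact not_sampling_exists_far_peak_general hΩcompact.isBounded hΩconvex hΩpos hnot
    (Nat.cast_pos.2 hn) (one_div_pos.2 (Nat.cast_pos.2 hn)) hε
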